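/- Suppose 0 ≤ α and both α⁴ − 4(1−√2)α³ − 12(3−√2)α² − 12(6−√2)α − 48 < 0 and 6α⁵ + (23+3√2)α⁴ + (13+19√2)α³ − (77−38√2)α² − (157−24√2)α − 96 < 0 (these inequalities hold exactly for 0 ≤ α < α₊, where α₊ ≈ 1.524 is the largest real root of the quintic). Then the 3D Lamé system is positive definite with weight Φ: for every u ∈ C_0^∞(ℝ³∖{0};ℝ³), ∫_{ℝ³}(Lu)·(Φu) dx ≥ 0. -/

import Mathlib

/-!
Write `r = |x|`, `ω = x / r`, `κ = α / (α + 2)`, `Φ = c_α W` with `W = r⁻¹ (I + κ ω⊗ω)`, and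
`M_ij = ∂ᵢ uⱼ`, `T = tr M = div u`. Away from the origin,

  `(Lu)·(Wu) = div V + r⁻¹ (|M|² + κ |Mω|² + α T² + α κ T (ω·Mω) - κ (T² - tr M²))`

for an explicit flux `V` (`lameFlux`). The flux collects the usual integrations by parts together
with the null Lagrangian `div (r⁻¹ (u div u - (u·∇) u))`, taken with the factor `κ` for which every
term containing an undifferentiated `u` cancels; the cancellation uses `α (κ - 1) = -2 κ`.

The form in `M` on the right (`residualForm`) is nonnegative at every point: splitting off the trace
parts `m = ω·Mω` and `p = T - m` leaves the binary form
`((α + 1)² (p² + 2 m²) + (3 α² + 2 α) p m) / (α + 2)`, which is nonnegative when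
`3 α² + 2 α ≤ 2 √2 (α + 1)²`, hence for `0 ≤ α ≤ 2`, and the quintic inequality forces `α ≤ 2`.
Since `u` vanishes near the origin and has compact support, so does `V`, and `∫ div V = 0`.
-/

open MeasureTheory Metric Real Filter

noncomputable section

/-- `ℝ³` as Euclidean space. -/
abbrev E3 : Type := EuclideanSpace ℝ (Fin 3)

/-- Partial derivative `∂ᵢ f` on `ℝ³`. -/
def pd (i : Fin 3) (f : E3 → ℝ) (x : E3) : ℝ :=
  fderiv ℝ f x (EuclideanSpace.single i 1)

/-- Laplacian on `ℝ³`. -/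
def lap (f : E3 → ℝ) (x : E3) : ℝ := ∑ i, pd i (pd i f) x

/-- Divergence of a vector field on `ℝ³`. -/
def divg (u : E3 → Fin 3 → ℝ) (x : E3) : ℝ := ∑ k, pd k (fun y => u y k) x

/-- The 3D Lamé operator `(Lu)ᵢ = -Δuᵢ - α ∂ᵢ (div u)`. -/
def lame (α : ℝ) (u : E3 → Fin 3 → ℝ) (x : E3) (i : Fin 3) : ℝ :=
  - lap (fun y => u y i) x - α * pd i (divg u) x

/-- The constant `c_α = (α+2)/(8π(α+1))`. -/
def cA (α : ℝ) : ℝ := (α + 2) / (8 * Real.pi * (α + 1))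

/-- The fundamental matrix `Φ` of the 3D Lamé system:
`Φ_ij(x) = c_α |x|⁻¹ (δ_ij + (α/(α+2)) xᵢxⱼ/|x|²)`. -/
def Phi (α : ℝ) (x : E3) (i j : Fin 3) : ℝ :=
  cA α * ‖x‖⁻¹ * ((if i = j then (1 : ℝ) else 0) + (α / (α + 2)) * (x i * x j) / ‖x‖ ^ 2)

/-- `u ∈ C₀^∞(U; ℝ³)`: smooth, compactly supported, with support inside `U`. -/
def IsTestOn (U : Set E3) (u : E3 → Fin 3 → ℝ) : Prop :=
  ContDiff ℝ (⊤ : ℕ∞) u ∧ HasCompactSupport u ∧ tsupport u ⊆ U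

/-- `∫_{ℝ³} (Lu)·(Φ(·-y) u) dx`. -/
def lameEnergy (α : ℝ) (u : E3 → Fin 3 → ℝ) (y : E3) : ℝ :=
  ∫ x : E3, ∑ i, ∑ j, lame α u x i * Phi α (x - y) i j * u x j

section ResidualForm

open Matrix

lemma trace_mul_transpose_add_mul_trace_sq_nonneg {n : Type*} [Fintype n] {κ : ℝ} (hκ : |κ| ≤ 1)
    (D : Matrix n n ℝ) : 0 ≤ (D * Dᵀ).trace + κ * (D * D).trace := by
  obtain ⟨hκ₁, hκ₂⟩ := abs_le.1 hκ
  have sum_of_squares : (D * Dᵀ).trace + κ * (D * D).trace =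
      ∑ i, ∑ j, ((1 + κ) / 4 * (D i j + D j i) ^ 2 + (1 - κ) / 4 * (D i j - D j i) ^ 2) := by
    have transpose_sq : ∑ i, ∑ j, D j i * D j i = ∑ i, ∑ j, D i j * D i j := Finset.sum_comm
    have expand (i j : n) :
        (1 + κ) / 4 * (D i j + D j i) ^ 2 + (1 - κ) / 4 * (D i j - D j i) ^ 2 =
          2⁻¹ * (D i j * D i j) + 2⁻¹ * (D j i * D j i) + κ * (D i j * D j i) := by ring
    simp only [expand, Finset.sum_add_distrib, ← Finset.mul_sum, transpose_sq, trace, diag_apply,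
      mul_apply, transpose_apply]
    ring
  rw [sum_of_squares]
  have : 0 ≤ 1 + κ := by linarith
  have : 0 ≤ 1 - κ := by linarith
  positivity

lemma trace_compression_sub_smul_mul {n R : Type*} [Fintype n] [CommRing R] {P : Matrix n n R}
    (hP : IsIdempotentElem P) (M K : Matrix n n R) (d : R) :
    ((P * M * P - d • P) * (P * K * P - d • P)).trace =
      (P * M * P * K).trace - d * (P * M).trace - d * (P * K).trace + d ^ 2 * P.trace := by
  have trace_compression (A : Matrix n n R) : (P * A * P).trace = (P * A).trace := by
    rw [trace_mul_cycle, hP.eq]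
  have left_absorb (A : Matrix n n R) : P * (P * A) = P * A := by
    rw [← Matrix.mul_assoc, hP.eq]
  have trace_mul_compression : (P * M * P * (P * K * P)).trace = (P * M * P * K).trace := by
    have := trace_compression (M * P * K)
    simpa only [Matrix.mul_assoc, left_absorb] using this
  simp only [Matrix.sub_mul, Matrix.mul_sub, Matrix.smul_mul, Matrix.mul_smul, trace_sub,
    trace_smul, smul_eq_mul, hP.eq, trace_mul_compression]
  rw [Matrix.mul_assoc (P * M) P P, Matrix.mul_assoc P K P, left_absorb, ← Matrix.mul_assoc,
    hP.eq, trace_compression, trace_compression]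
  ring

-- The compression `P M P` is split into its multiple of `P` with the same trace and the rest.
lemma mul_sq_trace_div_trace_le {n : Type*} [Fintype n] {κ : ℝ} (hκ : |κ| ≤ 1)
    {P : Matrix n n ℝ} (hPsymm : P.IsSymm) (hP : IsIdempotentElem P) (M : Matrix n n ℝ) :
    (1 + κ) * ((P * M).trace ^ 2 / P.trace) ≤
      (P * M * P * Mᵀ).trace + κ * (P * M * P * M).trace := by
  set d := (P * M).trace / P.trace with hd
  have sq_div : (P * M).trace ^ 2 / P.trace = d * (P * M).trace := by rw [hd]; ring
  have sq_mul_trace : d ^ 2 * P.trace = d * (P * M).trace := by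
    rcases eq_or_ne P.trace 0 with h | h
    · simp [hd, h]
    · rw [hd]; field_simp
  have trace_transpose_eq : (P * Mᵀ).trace = (P * M).trace := by
    rw [← trace_transpose, transpose_mul, transpose_transpose, hPsymm.eq, trace_mul_comm]
  have transpose_eq : (P * M * P - d • P)ᵀ = P * Mᵀ * P - d • P := by
    simp [transpose_mul, hPsymm.eq, Matrix.mul_assoc]
  have nonneg := trace_mul_transpose_add_mul_trace_sq_nonneg hκ (P * M * P - d • P)
  rw [transpose_eq, trace_compression_sub_smul_mul hP, trace_compression_sub_smul_mul hP,
    trace_transpose_eq, sq_mul_trace] at nonneg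
  rw [sq_div]
  linarith

/-- The matrix `1 - w ⊗ w`, which for a unit vector `w` is the orthogonal projection onto the
hyperplane perpendicular to `w`. -/
def perpProjection {n R : Type*} [DecidableEq n] [CommRing R] (w : n → R) : Matrix n n R :=
  1 - vecMulVec w w

lemma perpProjection_isSymm {n R : Type*} [DecidableEq n] [CommRing R] (w : n → R) :
    (perpProjection w).IsSymm := by
  simp [IsSymm, perpProjection, transpose_sub]

section PerpProjection

variable {n R : Type*} [Fintype n] [CommRing R]

lemma perpProjection_isIdempotentElem [DecidableEq n] {w : n → R} (hw : w ⬝ᵥ w = 1) :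
    IsIdempotentElem (perpProjection w) := by
  simp [IsIdempotentElem, perpProjection, Matrix.mul_sub, Matrix.sub_mul,
    vecMulVec_mul_vecMulVec, hw]

lemma trace_perpProjection [DecidableEq n] {w : n → R} (hw : w ⬝ᵥ w = 1) :
    (perpProjection w).trace = Fintype.card n - 1 := by
  simp [perpProjection, hw]

lemma perpProjection_mul [DecidableEq n] (w : n → R) (M : Matrix n n R) :
    perpProjection w * M = M - vecMulVec w (w ᵥ* M) := by
  simp [perpProjection, Matrix.sub_mul, vecMulVec_mul]

lemma trace_perpProjection_mul [DecidableEq n] (w : n → R) (M : Matrix n n R) :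
    (perpProjection w * M).trace = M.trace - w ⬝ᵥ M *ᵥ w := by
  simp [perpProjection_mul, dotProduct_mulVec, dotProduct_comm]

lemma trace_perpProjection_mul_perpProjection_mul [DecidableEq n] (w : n → R)
    (M K : Matrix n n R) :
    (perpProjection w * M * perpProjection w * K).trace =
      (M * K).trace - (w ᵥ* M) ⬝ᵥ (K *ᵥ w) - (w ᵥ* K) ⬝ᵥ (M *ᵥ w)
        + (w ⬝ᵥ M *ᵥ w) * (w ⬝ᵥ K *ᵥ w) := by
  rw [Matrix.mul_assoc (perpProjection w * M), perpProjection_mul, perpProjection_mul]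
  simp only [Matrix.sub_mul, Matrix.mul_sub, vecMulVec_mul, mul_vecMulVec, trace_sub,
    trace_vecMulVec, sub_mulVec, vecMulVec_mulVec, dotProduct_mulVec,
    dotProduct_comm _ (w ᵥ* K)]
  simp only [vecMul_vecMul, dotProduct_comm w, op_smul_eq_smul, dotProduct_sub,
    dotProduct_mulVec, dotProduct_smul, smul_eq_mul]
  ring

lemma dotProduct_vecMul_self (w : n → R) (M : Matrix n n R) :
    w ⬝ᵥ w ᵥ* M = w ⬝ᵥ M *ᵥ w := by
  rw [dotProduct_mulVec, dotProduct_comm]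

lemma dotProduct_sub_smul_self_of_unit {w : n → R} (hw : w ⬝ᵥ w = 1) (a b : n → R) :
    (a - (w ⬝ᵥ a) • w) ⬝ᵥ (b - (w ⬝ᵥ b) • w) = a ⬝ᵥ b - (w ⬝ᵥ a) * (w ⬝ᵥ b) := by
  simp only [sub_dotProduct, dotProduct_sub, smul_dotProduct, dotProduct_smul, smul_eq_mul, hw,
    dotProduct_comm a w]
  ring

end PerpProjection

lemma dotProduct_form_nonneg {n : Type*} [Fintype n] {κ : ℝ} (hκ : κ ^ 2 ≤ 1 + κ) (a b : n → ℝ) :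
    0 ≤ b ⬝ᵥ b + 2 * κ * (b ⬝ᵥ a) + (1 + κ) * (a ⬝ᵥ a) := by
  have complete_square : b ⬝ᵥ b + 2 * κ * (b ⬝ᵥ a) + (1 + κ) * (a ⬝ᵥ a) =
      (b + κ • a) ⬝ᵥ (b + κ • a) + (1 + κ - κ ^ 2) * (a ⬝ᵥ a) := by
    simp only [add_dotProduct, dotProduct_add, smul_dotProduct, dotProduct_smul, smul_eq_mul,
      dotProduct_comm a b]
    ring
  rw [complete_square]
  exact add_nonneg (Finset.sum_nonneg fun i _ => mul_self_nonneg _)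
    (mul_nonneg (sub_nonneg.2 hκ) (Finset.sum_nonneg fun i _ => mul_self_nonneg _))

/-- The quadratic form in the gradient matrix `M` that remains of `(Lu)·(Φu)` in the direction
`w = x / |x|` once divergences are removed, in units of `c_α / |x|`; `κ` stands for
`α / (α + 2)`. -/
def residualForm {n : Type*} [Fintype n] (α κ : ℝ) (M : Matrix n n ℝ) (w : n → ℝ) : ℝ :=
  (M * Mᵀ).trace + κ * ((M *ᵥ w) ⬝ᵥ (M *ᵥ w)) + α * M.trace * (M.trace + κ * (w ⬝ᵥ M *ᵥ w))
    - κ * (M.trace ^ 2 - (M * M).trace)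

lemma sq_div_add_two_le {α : ℝ} (hα : -1 < α)
    (h : 3 * α ^ 2 + 2 * α ≤ 2 * √2 * (α + 1) ^ 2) :
    (α / (α + 2)) ^ 2 ≤ 1 + α / (α + 2) := by
  have two_sqrt_two_le : 2 * √2 ≤ 3 := by
    nlinarith [Real.sq_sqrt (show (0 : ℝ) ≤ 2 by norm_num), Real.sqrt_nonneg 2]
  have neg_three_quarters_le : -(3 / 4) ≤ α := by
    nlinarith [mul_le_mul_of_nonneg_right two_sqrt_two_le (sq_nonneg (α + 1))]
  have pos : 0 < α + 2 := by linarith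
  have eq : 1 + α / (α + 2) - (α / (α + 2)) ^ 2 = (α ^ 2 + 6 * α + 4) / (α + 2) ^ 2 := by
    field_simp
    ring
  have : 0 ≤ (α ^ 2 + 6 * α + 4) / (α + 2) ^ 2 := div_nonneg (by nlinarith) (by positivity)
  linarith

lemma trace_form_nonneg {α : ℝ} (h : 3 * α ^ 2 + 2 * α ≤ 2 * √2 * (α + 1) ^ 2) (p m : ℝ) :
    0 ≤ (α + 1) ^ 2 * (p ^ 2 + 2 * m ^ 2) + (3 * α ^ 2 + 2 * α) * (p * m) := by
  have sqrt_sq : √2 ^ 2 = 2 := Real.sq_sqrt (by norm_num)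
  have lower : -(2 * √2 * (α + 1) ^ 2) ≤ 3 * α ^ 2 + 2 * α := by
    have : 1.4 ≤ √2 := Real.le_sqrt_of_sq_le (by norm_num)
    nlinarith [mul_le_mul_of_nonneg_right this (sq_nonneg (α + 1)), sq_nonneg (α + 19 / 29)]
  have cross : |3 * α ^ 2 + 2 * α| * |p * m| ≤ 2 * √2 * (α + 1) ^ 2 * |p * m| :=
    mul_le_mul_of_nonneg_right (abs_le.2 ⟨lower, h⟩) (abs_nonneg _)
  have am_gm : 2 * √2 * |p * m| ≤ p ^ 2 + 2 * m ^ 2 := by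
    rw [abs_mul]
    nlinarith [sq_nonneg (|p| - √2 * |m|), sq_abs p, sq_abs m]
  have := neg_abs_le ((3 * α ^ 2 + 2 * α) * (p * m))
  rw [abs_mul] at this
  nlinarith [mul_le_mul_of_nonneg_left am_gm (sq_nonneg (α + 1))]

lemma transverse_trace_sq_le {n : Type*} [Fintype n] {κ : ℝ} (hκ : |κ| ≤ 1) {w : n → ℝ}
    (hw : w ⬝ᵥ w = 1) (M : Matrix n n ℝ) :
    (1 + κ) * ((M.trace - w ⬝ᵥ M *ᵥ w) ^ 2 / (Fintype.card n - 1)) ≤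
      (M * Mᵀ).trace - (w ᵥ* M) ⬝ᵥ (w ᵥ* M) - (M *ᵥ w) ⬝ᵥ (M *ᵥ w) + (w ⬝ᵥ M *ᵥ w) ^ 2
        + κ * ((M * M).trace - 2 * ((w ᵥ* M) ⬝ᵥ (M *ᵥ w)) + (w ⬝ᵥ M *ᵥ w) ^ 2) := by
  classical
  have le := mul_sq_trace_div_trace_le hκ (perpProjection_isSymm w)
    (perpProjection_isIdempotentElem hw) M
  rw [trace_perpProjection hw, trace_perpProjection_mul,
    trace_perpProjection_mul_perpProjection_mul, trace_perpProjection_mul_perpProjection_mul,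
    mulVec_transpose, vecMul_transpose, dotProduct_vecMul_self] at le
  linarith

lemma residualForm_nonneg {α : ℝ} (hα : -1 < α)
    (h : 3 * α ^ 2 + 2 * α ≤ 2 * √2 * (α + 1) ^ 2) {w : Fin 3 → ℝ} (hw : w ⬝ᵥ w = 1)
    (M : Matrix (Fin 3) (Fin 3) ℝ) : 0 ≤ residualForm α (α / (α + 2)) M w := by
  have pos : 0 < α + 2 := by linarith
  have abs_le_one : |α / (α + 2)| ≤ 1 := by
    rw [abs_le, le_div_iff₀ pos, div_le_one pos]
    constructor <;> linarith
  have hκ := sq_div_add_two_le hα h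
  have card_sub_one : (Fintype.card (Fin 3) : ℝ) - 1 = 2 := by norm_num
  have transverse := transverse_trace_sq_le abs_le_one hw M
  have mixed := dotProduct_form_nonneg hκ
    (M *ᵥ w - (w ⬝ᵥ M *ᵥ w) • w) (w ᵥ* M - (w ⬝ᵥ w ᵥ* M) • w)
  simp only [dotProduct_sub_smul_self_of_unit hw] at mixed
  rw [dotProduct_vecMul_self] at mixed
  rw [residualForm]
  set m := w ⬝ᵥ M *ᵥ w
  obtain ⟨p, hp⟩ : ∃ p, M.trace = p + m := ⟨M.trace - m, by ring⟩
  rw [hp, add_sub_cancel_right, card_sub_one] at transverse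
  have traces : 0 ≤ ((1 - α / (α + 2)) / 2 + α) * p ^ 2
      + (1 + α / (α + 2)) * (1 + α) * m ^ 2
      + (2 * α + α * (α / (α + 2)) - 2 * (α / (α + 2))) * (p * m) := by
    have := div_nonneg (trace_form_nonneg h p m) pos.le
    calc
      _ ≤ _ := this
      _ = _ := by
        field_simp
        ring
  rw [hp]
  linarith

end ResidualForm

section Regularity

open Matrix

variable {E ι : Type*} [NormedAddCommGroup E] [Fintype ι]

lemma contDiffAt_dotProduct [NormedSpace ℝ E] {n : WithTop ℕ∞} {V W : E → ι → ℝ} {x : E}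
    (hV : ContDiffAt ℝ n V x) (hW : ContDiffAt ℝ n W x) :
    ContDiffAt ℝ n (fun y => V y ⬝ᵥ W y) x := by
  unfold dotProduct
  fun_prop

lemma differentiableAt_dotProduct [NormedSpace ℝ E] {V W : E → ι → ℝ} {x : E}
    (hV : DifferentiableAt ℝ V x) (hW : DifferentiableAt ℝ W x) :
    DifferentiableAt ℝ (fun y => V y ⬝ᵥ W y) x := by
  unfold dotProduct
  fun_prop

lemma contDiffAt_mulVec [NormedSpace ℝ E] {κ : Type*} [Fintype κ] {n : WithTop ℕ∞}
    {A : E → Matrix κ ι ℝ} {z : E → ι → ℝ} {x : E}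
    (hA : ∀ k i, ContDiffAt ℝ n (fun y => A y k i) x) (hz : ContDiffAt ℝ n z x) :
    ContDiffAt ℝ n (fun y => A y *ᵥ z y) x :=
  contDiffAt_pi.2 fun k => contDiffAt_dotProduct (contDiffAt_pi.2 (hA k)) hz

variable [InnerProductSpace ℝ E] {x : E}

lemma hasFDerivAt_norm_of_ne_zero (hx : x ≠ 0) :
    HasFDerivAt (fun y : E => ‖y‖) (‖x‖⁻¹ • innerSL ℝ x) x := by
  have norm_ne_zero : ‖x‖ ≠ 0 := norm_ne_zero_iff.2 hx
  have sqrt_norm_sq := (hasStrictFDerivAt_norm_sq x).hasFDerivAt.sqrt (pow_ne_zero 2 norm_ne_zero)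
  simp only [Real.sqrt_sq (norm_nonneg _)] at sqrt_norm_sq
  refine sqrt_norm_sq.congr_fderiv ?_
  rw [← Nat.cast_smul_eq_nsmul ℝ, smul_smul, Nat.cast_ofNat, one_div_mul_eq_div,
    div_mul_cancel_left₀ two_ne_zero]

lemma contDiffAt_inv_norm_pow {m : WithTop ℕ∞} (n : ℕ) (hx : x ≠ 0) :
    ContDiffAt ℝ m (fun y : E => ‖y‖⁻¹ ^ n) x :=
  ((contDiffAt_norm ℝ hx).inv (norm_ne_zero_iff.2 hx)).pow n

lemma differentiableAt_inv_norm_pow (n : ℕ) (hx : x ≠ 0) :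
    DifferentiableAt ℝ (fun y : E => ‖y‖⁻¹ ^ n) x :=
  (contDiffAt_inv_norm_pow (m := 1) n hx).differentiableAt (by norm_num)

lemma contDiffAt_inv_norm {n : WithTop ℕ∞} (hx : x ≠ 0) :
    ContDiffAt ℝ n (fun y : E => ‖y‖⁻¹) x :=
  (contDiffAt_norm ℝ hx).inv (norm_ne_zero_iff.2 hx)

lemma differentiableAt_inv_norm (hx : x ≠ 0) : DifferentiableAt ℝ (fun y : E => ‖y‖⁻¹) x :=
  (contDiffAt_inv_norm (n := 1) hx).differentiableAt (by norm_num)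

end Regularity

section PartialDerivatives

open Matrix

variable {f g : E3 → ℝ} {V W : E3 → Fin 3 → ℝ} {x : E3} {k : Fin 3}

lemma pd_add (hf : DifferentiableAt ℝ f x) (hg : DifferentiableAt ℝ g x) :
    pd k (fun y => f y + g y) x = pd k f x + pd k g x := by
  simp [pd, fderiv_fun_add hf hg]

lemma pd_sub (hf : DifferentiableAt ℝ f x) (hg : DifferentiableAt ℝ g x) :
    pd k (fun y => f y - g y) x = pd k f x - pd k g x := by
  simp [pd, fderiv_fun_sub hf hg]

lemma pd_mul (hf : DifferentiableAt ℝ f x) (hg : DifferentiableAt ℝ g x) :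
    pd k (fun y => f y * g y) x = pd k f x * g x + f x * pd k g x := by
  simp [pd, fderiv_fun_mul hf hg, add_comm, mul_comm]

lemma pd_const_mul (c : ℝ) (hf : DifferentiableAt ℝ f x) :
    pd k (fun y => c * f y) x = c * pd k f x := by
  simp [pd, fderiv_const_mul hf]

lemma pd_sum {ι : Type*} {s : Finset ι} {F : ι → E3 → ℝ}
    (hF : ∀ i ∈ s, DifferentiableAt ℝ (F i) x) :
    pd k (fun y => ∑ i ∈ s, F i y) x = ∑ i ∈ s, pd k (F i) x := by
  simp [pd, fderiv_fun_sum hF]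

lemma pd_coord (j k : Fin 3) (x : E3) : pd k (fun y => y j) x = if j = k then 1 else 0 := by
  have : HasFDerivAt (fun y : E3 => y j) (EuclideanSpace.proj j : E3 →L[ℝ] ℝ) x :=
    (EuclideanSpace.proj j : E3 →L[ℝ] ℝ).hasFDerivAt
  simp [pd, this.fderiv]

lemma sum_pd_mul_one (f : E3 → ℝ) (x : E3) (i : Fin 3) :
    ∑ k, pd k (fun y => f y * (1 : Matrix (Fin 3) (Fin 3) ℝ) k i) x = pd i f x := by
  rw [Finset.sum_eq_single_of_mem i (Finset.mem_univ i)]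
  · simp
  · intro k _ hk
    simp [one_apply, hk, pd]

lemma pd_inv_norm_pow (n : ℕ) (k : Fin 3) (hx : x ≠ 0) :
    pd k (fun y => ‖y‖⁻¹ ^ n) x = -(n * ‖x‖⁻¹ ^ (n + 2) * x k) := by
  have coefficient : (n * ‖x‖⁻¹ ^ (n - 1) * -(‖x‖ ^ 2)⁻¹) * ‖x‖⁻¹ = -(n * ‖x‖⁻¹ ^ (n + 2)) := by
    cases n with
    | zero => simp
    | succ n => rw [Nat.add_sub_cancel, ← inv_pow]; ring
  have chain_rule : HasFDerivAt (fun y : E3 => ‖y‖⁻¹ ^ n)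
      ((n * ‖x‖⁻¹ ^ (n - 1) * -(‖x‖ ^ 2)⁻¹) • ‖x‖⁻¹ • innerSL ℝ x) x :=
    ((hasDerivAt_inv (norm_ne_zero_iff.2 hx)).pow n).comp_hasFDerivAt x
      (hasFDerivAt_norm_of_ne_zero hx)
  rw [smul_smul, coefficient] at chain_rule
  rw [pd, chain_rule.fderiv]
  simp [EuclideanSpace.inner_single_right]

lemma contDiff_pd {n m : WithTop ℕ∞} (hf : ContDiff ℝ m f) (hnm : n + 1 ≤ m) (k : Fin 3) :
    ContDiff ℝ n (pd k f) :=
  (hf.fderiv_right hnm).clm_apply contDiff_const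

lemma pd_comm (hf : ContDiff ℝ 2 f) (j k : Fin 3) (x : E3) :
    pd j (pd k f) x = pd k (pd j f) x := by
  have second_deriv (a b : Fin 3) : pd a (pd b f) x =
      fderiv ℝ (fderiv ℝ f) x (EuclideanSpace.single a 1) (EuclideanSpace.single b 1) := by
    have : DifferentiableAt ℝ (fderiv ℝ f) x :=
      (hf.fderiv_right (m := 1) (by norm_num)).differentiable (by norm_num) x
    change fderiv ℝ (fun y => fderiv ℝ f y (EuclideanSpace.single b 1)) x _ = _
    rw [fderiv_clm_apply this (by fun_prop)]
    simp
  rw [second_deriv, second_deriv]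
  exact (hf.contDiffAt.isSymmSndFDerivAt (by simp)).eq _ _

/-- The gradient `(∂ₖ f)ₖ` of a scalar function, as a plain coordinate vector. -/
def gradVec (f : E3 → ℝ) (x : E3) : Fin 3 → ℝ := fun k => pd k f x

/-- The matrix `∂ᵢ uⱼ` of first derivatives of a vector field; its rows are indexed by the
direction of differentiation, so that it is the transpose of the Jacobian matrix. -/
def gradMatrix (u : E3 → Fin 3 → ℝ) (x : E3) : Matrix (Fin 3) (Fin 3) ℝ :=
  of fun i j => pd i (fun y => u y j) x

lemma trace_gradMatrix (u : E3 → Fin 3 → ℝ) (x : E3) : (gradMatrix u x).trace = divg u x := rfl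

lemma contDiff_gradMatrix_apply {n m : WithTop ℕ∞} (hV : ContDiff ℝ m V) (hnm : n + 1 ≤ m)
    (i j : Fin 3) : ContDiff ℝ n (fun y => gradMatrix V y i j) :=
  contDiff_pd (contDiff_pi.1 hV j) hnm i

lemma contDiff_divg {n m : WithTop ℕ∞} (hV : ContDiff ℝ m V) (hnm : n + 1 ≤ m) :
    ContDiff ℝ n (divg V) :=
  ContDiff.sum fun k _ => contDiff_gradMatrix_apply hV hnm k k

lemma gradVec_inv_norm_pow (n : ℕ) (hx : x ≠ 0) :
    gradVec (fun y => ‖y‖⁻¹ ^ n) x = -(n * ‖x‖⁻¹ ^ (n + 2)) • x.ofLp := by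
  ext k
  simp only [gradVec, pd_inv_norm_pow n k hx, Pi.smul_apply, smul_eq_mul, neg_mul]

lemma gradVec_dotProduct (hV : DifferentiableAt ℝ V x) (hW : DifferentiableAt ℝ W x) :
    gradVec (fun y => V y ⬝ᵥ W y) x = gradMatrix V x *ᵥ W x + gradMatrix W x *ᵥ V x := by
  rw [differentiableAt_pi] at hV hW
  ext k
  simp only [gradVec, dotProduct, Pi.add_apply, mulVec, gradMatrix, of_apply]
  rw [pd_sum fun i _ => (hV i).fun_mul (hW i), ← Finset.sum_add_distrib]
  refine Finset.sum_congr rfl fun i _ => ?_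
  rw [pd_mul (hV i) (hW i), mul_comm (V x i)]

lemma gradVec_mul (hf : DifferentiableAt ℝ f x) (hg : DifferentiableAt ℝ g x) :
    gradVec (fun y => f y * g y) x = g x • gradVec f x + f x • gradVec g x := by
  ext k
  simp [gradVec, pd_mul hf hg, mul_comm]

lemma gradMatrix_id (x : E3) : gradMatrix (fun y => y.ofLp) x = 1 := by
  ext i j
  simp [gradMatrix, pd_coord, one_apply, eq_comm]

lemma gradVec_ofLp_dotProduct (hV : DifferentiableAt ℝ V x) :
    gradVec (fun y => y.ofLp ⬝ᵥ V y) x = V x + gradMatrix V x *ᵥ x.ofLp := by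
  rw [gradVec_dotProduct (by fun_prop) hV, gradMatrix_id, one_mulVec]

lemma gradMatrix_add (hV : DifferentiableAt ℝ V x) (hW : DifferentiableAt ℝ W x) :
    gradMatrix (fun y => V y + W y) x = gradMatrix V x + gradMatrix W x := by
  rw [differentiableAt_pi] at hV hW
  ext i j
  exact pd_add (hV j) (hW j)

lemma gradMatrix_const_smul (c : ℝ) (hV : DifferentiableAt ℝ V x) :
    gradMatrix (fun y => c • V y) x = c • gradMatrix V x := by
  rw [differentiableAt_pi] at hV
  ext i j
  exact pd_const_mul c (hV j)

lemma gradMatrix_smul (hf : DifferentiableAt ℝ f x) (hV : DifferentiableAt ℝ V x) :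
    gradMatrix (fun y => f y • V y) x = f x • gradMatrix V x + vecMulVec (gradVec f x) (V x) := by
  rw [differentiableAt_pi] at hV
  ext i j
  simp [gradMatrix, gradVec, vecMulVec_apply, pd_mul hf (hV j), add_comm]

lemma gradMatrix_smul_ofLp (hf : DifferentiableAt ℝ f x) :
    gradMatrix (fun y => f y • y.ofLp) x = f x • 1 + vecMulVec (gradVec f x) x.ofLp := by
  rw [gradMatrix_smul hf (by fun_prop), gradMatrix_id]

lemma divg_add (hV : DifferentiableAt ℝ V x) (hW : DifferentiableAt ℝ W x) :
    divg (fun y => V y + W y) x = divg V x + divg W x := by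
  simp only [← trace_gradMatrix, gradMatrix_add hV hW, trace_add]

lemma divg_const_smul (c : ℝ) (hV : DifferentiableAt ℝ V x) :
    divg (fun y => c • V y) x = c * divg V x := by
  simp only [← trace_gradMatrix, gradMatrix_const_smul c hV, trace_smul, smul_eq_mul]

lemma divg_mulVec {A : E3 → Matrix (Fin 3) (Fin 3) ℝ}
    (hA : ∀ k i, DifferentiableAt ℝ (fun y => A y k i) x) (hV : DifferentiableAt ℝ V x) :
    divg (fun y => A y *ᵥ V y) x =
      (fun i => ∑ k, pd k (fun y => A y k i) x) ⬝ᵥ V x + (A x * (gradMatrix V x)ᵀ).trace := by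
  rw [differentiableAt_pi] at hV
  simp only [divg, mulVec, dotProduct, trace, diag_apply, mul_apply, transpose_apply, gradMatrix,
    of_apply, Finset.sum_mul]
  rw [Finset.sum_comm (f := fun i k => pd k (fun y => A y k i) x * V x i),
    ← Finset.sum_add_distrib]
  refine Finset.sum_congr rfl fun k _ => ?_
  rw [pd_sum fun i _ => (hA k i).fun_mul (hV i), ← Finset.sum_add_distrib]
  exact Finset.sum_congr rfl fun i _ => pd_mul (hA k i) (hV i)

lemma dotProduct_ofLp_self (x : E3) : x.ofLp ⬝ᵥ x.ofLp = ‖x‖ ^ 2 := by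
  simp only [EuclideanSpace.real_norm_sq_eq, dotProduct, pow_two (x.ofLp _)]

lemma inv_norm_sq_mul_dotProduct_ofLp_self (hx : x ≠ 0) :
    ‖x‖⁻¹ ^ 2 * (x.ofLp ⬝ᵥ x.ofLp) = 1 := by
  have := norm_ne_zero_iff.2 hx
  rw [dotProduct_ofLp_self]
  field_simp

lemma inv_norm_smul_dotProduct_self (hx : x ≠ 0) :
    (‖x‖⁻¹ • x.ofLp) ⬝ᵥ (‖x‖⁻¹ • x.ofLp) = 1 := by
  rw [← inv_norm_sq_mul_dotProduct_ofLp_self hx, smul_dotProduct, dotProduct_smul, smul_smul,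
    smul_eq_mul, sq]

lemma gradMatrix_inv_norm_pow_smul (n : ℕ) (hx : x ≠ 0) (hV : DifferentiableAt ℝ V x) :
    gradMatrix (fun y => ‖y‖⁻¹ ^ n • V y) x =
      ‖x‖⁻¹ ^ n • gradMatrix V x - (n * ‖x‖⁻¹ ^ (n + 2)) • vecMulVec x.ofLp (V x) := by
  rw [gradMatrix_smul (differentiableAt_inv_norm_pow n hx) hV, gradVec_inv_norm_pow n hx,
    smul_vecMulVec, neg_smul, sub_eq_add_neg]

lemma gradMatrix_inv_norm_smul (hx : x ≠ 0) (hV : DifferentiableAt ℝ V x) :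
    gradMatrix (fun y => ‖y‖⁻¹ • V y) x =
      ‖x‖⁻¹ • gradMatrix V x - ‖x‖⁻¹ ^ 3 • vecMulVec x.ofLp (V x) := by
  simpa only [pow_one, Nat.cast_one, one_mul] using gradMatrix_inv_norm_pow_smul 1 hx hV

/-- The radial field `x ↦ |x|⁻ⁿ f(x) x`, whose divergence is used to absorb terms that contain `u`
undifferentiated. -/
def radialField (n : ℕ) (f : E3 → ℝ) (x : E3) : Fin 3 → ℝ := ‖x‖⁻¹ ^ n • f x • x.ofLp

lemma gradMatrix_radialField (n : ℕ) (hx : x ≠ 0) (hf : DifferentiableAt ℝ f x) :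
    gradMatrix (radialField n f) x =
      ‖x‖⁻¹ ^ n • (f x • 1 + vecMulVec (gradVec f x) x.ofLp)
        - (n * ‖x‖⁻¹ ^ (n + 2) * f x) • vecMulVec x.ofLp x.ofLp := by
  unfold radialField
  rw [gradMatrix_inv_norm_pow_smul n hx (by fun_prop), gradMatrix_smul_ofLp hf, vecMulVec_smul,
    smul_smul]

lemma divg_radialField (n : ℕ) (hx : x ≠ 0) (hf : DifferentiableAt ℝ f x) :
    divg (radialField n f) x = ‖x‖⁻¹ ^ n * ((3 - n) * f x + gradVec f x ⬝ᵥ x.ofLp) := by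
  rw [← trace_gradMatrix, gradMatrix_radialField n hx hf]
  simp only [trace_sub, trace_add, trace_smul, trace_one, trace_vecMulVec, smul_eq_mul,
    Fintype.card_fin]
  push_cast
  linear_combination -(n * f x * ‖x‖⁻¹ ^ n) * inv_norm_sq_mul_dotProduct_ofLp_self hx

lemma contDiffAt_radialField {n : WithTop ℕ∞} (m : ℕ) (hf : ContDiffAt ℝ n f x)
    (hx : x ≠ 0) : ContDiffAt ℝ n (radialField m f) x :=
  (contDiffAt_inv_norm_pow m hx).smul (hf.smul (by fun_prop))

lemma differentiableAt_radialField (m : ℕ) (hf : DifferentiableAt ℝ f x)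
    (hx : x ≠ 0) : DifferentiableAt ℝ (radialField m f) x :=
  (differentiableAt_inv_norm_pow m hx).fun_smul (hf.fun_smul (by fun_prop))

end PartialDerivatives

section DivergenceTheorem

variable {f : E3 → ℝ} {V : E3 → Fin 3 → ℝ}

lemma integrable_pd (hf : ContDiff ℝ 1 f) (hc : HasCompactSupport f) (k : Fin 3) :
    Integrable (pd k f) :=
  (contDiff_pd (n := 0) hf (by norm_num) k).continuous.integrable_of_hasCompactSupport
    (hc.fderiv_apply (𝕜 := ℝ) _)

lemma integral_pd_eq_zero (hf : ContDiff ℝ 1 f) (hc : HasCompactSupport f)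
    (k : Fin 3) : ∫ x, pd k f x = 0 := by
  have by_parts := integral_mul_fderiv_eq_neg_fderiv_mul_of_integrable
    (μ := (volume : Measure E3)) (𝕜 := ℝ) (f := fun _ => (1 : ℝ)) (g := f)
    (v := EuclideanSpace.single k 1) (by simp) (by simp only [one_mul]; exact integrable_pd hf hc k)
    (by simpa using hf.continuous.integrable_of_hasCompactSupport hc) (by fun_prop)
    (fun x _ => hf.differentiable one_ne_zero x)
  simpa [pd] using by_parts

lemma hasCompactSupport_apply (hc : HasCompactSupport V) (k : Fin 3) :
    HasCompactSupport fun x => V x k :=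
  hc.comp_left (g := fun v : Fin 3 → ℝ => v k) rfl

lemma integrable_divg (hV : ContDiff ℝ 1 V) (hc : HasCompactSupport V) : Integrable (divg V) :=
  integrable_finsetSum _ fun k _ =>
    integrable_pd (contDiff_pi.1 hV k) (hasCompactSupport_apply hc k) k

lemma integral_divg_eq_zero (hV : ContDiff ℝ 1 V) (hc : HasCompactSupport V) :
    ∫ x, divg V x = 0 := by
  unfold divg
  rw [integral_finsetSum _ fun k _ =>
    integrable_pd (contDiff_pi.1 hV k) (hasCompactSupport_apply hc k) k]
  exact Finset.sum_eq_zero fun k _ =>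
    integral_pd_eq_zero (contDiff_pi.1 hV k) (hasCompactSupport_apply hc k) k

end DivergenceTheorem

section LameFlux

open Matrix

variable {u z : E3 → Fin 3 → ℝ} {x : E3} {α κ : ℝ}

/-- The stress `∂ₖ uᵢ + α (div u) δₖᵢ`, whose divergence along the rows is `-Lu`. -/
def stress (α : ℝ) (u : E3 → Fin 3 → ℝ) (x : E3) : Matrix (Fin 3) (Fin 3) ℝ :=
  gradMatrix u x + (α * divg u x) • 1

/-- The matrix `(div u) δₖᵢ - ∂ᵢ uₖ`, whose divergence along the rows vanishes because second
derivatives commute; its product with `u` is the flux of the null Lagrangian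
`(div u)² - tr (∇u)²`. -/
def nullStress (u : E3 → Fin 3 → ℝ) (x : E3) : Matrix (Fin 3) (Fin 3) ℝ :=
  divg u x • 1 - (gradMatrix u x)ᵀ

lemma contDiff_stress_apply {n m : WithTop ℕ∞} (hu : ContDiff ℝ m u) (hnm : n + 1 ≤ m)
    (k i : Fin 3) : ContDiff ℝ n (fun y => stress α u y k i) :=
  (contDiff_gradMatrix_apply hu hnm k i).add
    ((contDiff_const.mul (contDiff_divg hu hnm)).mul contDiff_const)

lemma contDiff_nullStress_apply {n m : WithTop ℕ∞} (hu : ContDiff ℝ m u) (hnm : n + 1 ≤ m)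
    (k i : Fin 3) : ContDiff ℝ n (fun y => nullStress u y k i) :=
  ((contDiff_divg hu hnm).mul contDiff_const).sub (contDiff_gradMatrix_apply hu hnm i k)

lemma pd_divg (hu : ContDiff ℝ 2 u) (i : Fin 3) (x : E3) :
    pd i (divg u) x = ∑ k, pd k (fun y => gradMatrix u y i k) x := by
  have hd (k : Fin 3) : DifferentiableAt ℝ (fun y => gradMatrix u y k k) x :=
    (contDiff_gradMatrix_apply (n := 1) hu (by norm_num) k k).differentiable (by norm_num) x
  refine (pd_sum fun k _ => hd k).trans (Finset.sum_congr rfl fun k _ => ?_)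
  exact pd_comm (contDiff_pi.1 hu k) i k x

lemma sum_pd_stress (hu : ContDiff ℝ 2 u) (α : ℝ) (x : E3) (i : Fin 3) :
    ∑ k, pd k (fun y => stress α u y k i) x = -lame α u x i := by
  have hG (k : Fin 3) := (contDiff_gradMatrix_apply (n := 1) hu (by norm_num) k i).differentiable
    (by norm_num) x
  have hT := (contDiff_divg (n := 1) hu (by norm_num)).differentiable (by norm_num) x
  have (k : Fin 3) : pd k (fun y => stress α u y k i) x = pd k (fun y => gradMatrix u y k i) x
      + pd k (fun y => α * divg u y * (1 : Matrix (Fin 3) (Fin 3) ℝ) k i) x :=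
    pd_add (hG k) ((hT.const_mul α).mul_const _)
  simp only [this, Finset.sum_add_distrib]
  rw [sum_pd_mul_one (fun y => α * divg u y), pd_const_mul α hT, lame, lap]
  simp only [gradMatrix, of_apply]
  ring

lemma sum_pd_nullStress (hu : ContDiff ℝ 2 u) (x : E3) (i : Fin 3) :
    ∑ k, pd k (fun y => nullStress u y k i) x = 0 := by
  have hG (k : Fin 3) := (contDiff_gradMatrix_apply (n := 1) hu (by norm_num) i k).differentiable
    (by norm_num) x
  have hT := (contDiff_divg (n := 1) hu (by norm_num)).differentiable (by norm_num) x
  have (k : Fin 3) : pd k (fun y => nullStress u y k i) x =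
      pd k (fun y => divg u y * (1 : Matrix (Fin 3) (Fin 3) ℝ) k i) x
        - pd k (fun y => gradMatrix u y i k) x :=
    pd_sub (hT.mul_const _) (hG k)
  simp only [this, Finset.sum_sub_distrib]
  rw [sum_pd_mul_one, pd_divg hu, sub_self]

lemma divg_stress_mulVec (hu : ContDiff ℝ 2 u) (hz : DifferentiableAt ℝ z x) :
    divg (fun y => stress α u y *ᵥ z y) x =
      -(lame α u x ⬝ᵥ z x) + ((gradMatrix u x * (gradMatrix z x)ᵀ).trace
        + α * divg u x * divg z x) := by
  rw [divg_mulVec (fun k i => (contDiff_stress_apply (n := 1) hu (by norm_num) k i).differentiable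
    (by norm_num) x) hz, ← trace_gradMatrix z]
  simp only [sum_pd_stress hu]
  simp only [stress, Matrix.add_mul, Matrix.smul_mul, Matrix.one_mul, trace_add, trace_smul,
    trace_transpose, smul_eq_mul]
  rw [← neg_dotProduct]
  rfl

lemma divg_nullStress_mulVec (hu : ContDiff ℝ 2 u) (hz : DifferentiableAt ℝ z x) :
    divg (fun y => nullStress u y *ᵥ z y) x =
      divg u x * divg z x - (gradMatrix u x * gradMatrix z x).trace := by
  rw [divg_mulVec (fun k i => (contDiff_nullStress_apply (n := 1) hu (by norm_num) k
    i).differentiable (by norm_num) x) hz, ← trace_gradMatrix z]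
  simp only [sum_pd_nullStress hu]
  simp only [nullStress, Matrix.sub_mul, Matrix.smul_mul, Matrix.one_mul, trace_sub, trace_smul,
    trace_transpose, smul_eq_mul, ← transpose_mul]
  rw [trace_mul_comm (gradMatrix z x)]
  simp [dotProduct]

/-- The field `r⁻¹ (u + κ ω (ω·u))`, which for `κ = α / (α + 2)` is `Φ u` without the factor
`c_α`. -/
def weightedField (κ : ℝ) (u : E3 → Fin 3 → ℝ) (x : E3) : Fin 3 → ℝ :=
  ‖x‖⁻¹ • u x + κ • radialField 3 (fun y => y.ofLp ⬝ᵥ u y) x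

lemma contDiffAt_weightedField {n : WithTop ℕ∞} (hu : ContDiffAt ℝ n u x) (hx : x ≠ 0) :
    ContDiffAt ℝ n (weightedField κ u) x :=
  ((contDiffAt_inv_norm hx).smul hu).add
    ((contDiffAt_radialField 3 (contDiffAt_dotProduct (by fun_prop) hu) hx).const_smul κ)

lemma gradMatrix_weightedField (hu : DifferentiableAt ℝ u x) (hx : x ≠ 0) :
    gradMatrix (weightedField κ u) x =
      ‖x‖⁻¹ • gradMatrix u x - ‖x‖⁻¹ ^ 3 • vecMulVec x.ofLp (u x)
        + κ • (‖x‖⁻¹ ^ 3 • ((x.ofLp ⬝ᵥ u x) • 1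
            + vecMulVec (u x + gradMatrix u x *ᵥ x.ofLp) x.ofLp)
          - (3 * ‖x‖⁻¹ ^ 5 * (x.ofLp ⬝ᵥ u x)) • vecMulVec x.ofLp x.ofLp) := by
  have hg : DifferentiableAt ℝ (fun y : E3 => y.ofLp ⬝ᵥ u y) x :=
    differentiableAt_dotProduct (by fun_prop) hu
  have hn := differentiableAt_inv_norm hx
  have hr := differentiableAt_radialField 3 hg hx
  unfold weightedField
  rw [gradMatrix_add (hn.fun_smul hu) (hr.fun_const_smul κ), gradMatrix_const_smul κ hr,
    gradMatrix_inv_norm_smul hx hu, gradMatrix_radialField 3 hx hg, gradVec_ofLp_dotProduct hu,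
    Nat.cast_ofNat]

lemma divg_weightedField (hu : DifferentiableAt ℝ u x) (hx : x ≠ 0) :
    divg (weightedField κ u) x = ‖x‖⁻¹ * divg u x
      + (κ - 1) * ‖x‖⁻¹ ^ 3 * (x.ofLp ⬝ᵥ u x)
      + κ * ‖x‖⁻¹ ^ 3 * (x.ofLp ⬝ᵥ gradMatrix u x *ᵥ x.ofLp) := by
  rw [← trace_gradMatrix, gradMatrix_weightedField hu hx, ← trace_gradMatrix]
  simp only [trace_sub, trace_add, trace_smul, trace_one, trace_vecMulVec, smul_eq_mul,
    Fintype.card_fin, add_dotProduct, dotProduct_comm x.ofLp]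
  push_cast
  linear_combination (-3 * κ * ‖x‖⁻¹ ^ 3 * (u x ⬝ᵥ x.ofLp)) *
    inv_norm_sq_mul_dotProduct_ofLp_self hx

lemma trace_gradMatrix_mul_gradMatrix_weightedField (hu : DifferentiableAt ℝ u x) (hx : x ≠ 0) :
    (gradMatrix u x * (gradMatrix (weightedField κ u) x)ᵀ).trace =
      ‖x‖⁻¹ * (gradMatrix u x * (gradMatrix u x)ᵀ).trace
        + κ * ‖x‖⁻¹ ^ 3 * (gradMatrix u x *ᵥ x.ofLp ⬝ᵥ gradMatrix u x *ᵥ x.ofLp)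
        + κ * ‖x‖⁻¹ ^ 3 * ((x.ofLp ⬝ᵥ u x) * divg u x + u x ⬝ᵥ gradMatrix u x *ᵥ x.ofLp)
        - 2⁻¹ * divg (radialField 3 fun y => u y ⬝ᵥ u y) x
        - 3 / 2 * κ * divg (radialField 5 fun y => (y.ofLp ⬝ᵥ u y) * (y.ofLp ⬝ᵥ u y)) x := by
  have hg : DifferentiableAt ℝ (fun y : E3 => y.ofLp ⬝ᵥ u y) x :=
    differentiableAt_dotProduct (by fun_prop) hu
  rw [gradMatrix_weightedField hu hx, divg_radialField 3 hx (differentiableAt_dotProduct hu hu),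
    divg_radialField 5 hx (hg.fun_mul hg), gradVec_mul hg hg, gradVec_ofLp_dotProduct hu,
    gradVec_dotProduct hu hu, ← trace_gradMatrix]
  simp only [transpose_add, transpose_sub, transpose_smul, transpose_vecMulVec, transpose_one,
    Matrix.mul_add, Matrix.mul_sub, Matrix.mul_smul, Matrix.mul_one, mul_vecMulVec, trace_sub,
    trace_add, trace_smul, trace_vecMulVec, smul_eq_mul, add_dotProduct,
    dotProduct_add, smul_dotProduct, dotProduct_comm x.ofLp,
    dotProduct_comm (u x) (gradMatrix u x *ᵥ x.ofLp)]
  push_cast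
  ring

lemma divg_nullStress_mulVec_inv_norm_smul (hu : ContDiff ℝ 2 u) (hx : x ≠ 0) :
    divg (fun y => nullStress u y *ᵥ (‖y‖⁻¹ • u y)) x =
      ‖x‖⁻¹ * (divg u x ^ 2 - (gradMatrix u x * gradMatrix u x).trace)
        - ‖x‖⁻¹ ^ 3 * ((x.ofLp ⬝ᵥ u x) * divg u x - u x ⬝ᵥ gradMatrix u x *ᵥ x.ofLp) := by
  have hu' : DifferentiableAt ℝ u x := hu.differentiable (by norm_num) x
  rw [divg_nullStress_mulVec hu ((differentiableAt_inv_norm hx).fun_smul hu'),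
    ← trace_gradMatrix fun y => ‖y‖⁻¹ • u y, gradMatrix_inv_norm_smul hx hu', ← trace_gradMatrix u]
  simp only [Matrix.mul_sub, Matrix.mul_smul, mul_vecMulVec, trace_sub, trace_smul,
    trace_vecMulVec, smul_eq_mul, dotProduct_comm (u x)]
  ring

/-- The flux whose divergence is split off from `(Lu)·(weightedField κ u)`: one integration by parts
of `L`, two radial fields absorbing the terms `u·∂ᵣu`, and `κ` times a null Lagrangian, the factor
for which the terms `(ω·u) div u` and `u·Mω` that remain cancel when `κ = α / (α + 2)`. -/
def lameFlux (α κ : ℝ) (u : E3 → Fin 3 → ℝ) (x : E3) : Fin 3 → ℝ :=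
  (-1 : ℝ) • (stress α u x *ᵥ weightedField κ u x)
    + (-2⁻¹ : ℝ) • radialField 3 (fun y => u y ⬝ᵥ u y) x
    + (-(3 / 2 * κ)) • radialField 5 (fun y => (y.ofLp ⬝ᵥ u y) * (y.ofLp ⬝ᵥ u y)) x
    + κ • (nullStress u x *ᵥ (‖x‖⁻¹ • u x))

lemma contDiffAt_stress_mulVec_weightedField (hu : ContDiff ℝ 2 u) (hx : x ≠ 0) :
    ContDiffAt ℝ 1 (fun y => stress α u y *ᵥ weightedField κ u y) x :=
  contDiffAt_mulVec (fun k i => (contDiff_stress_apply hu (by norm_num) k i).contDiffAt)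
    (contDiffAt_weightedField (hu.contDiffAt.of_le (by norm_num)) hx)

lemma contDiffAt_nullStress_mulVec (hu : ContDiff ℝ 2 u) (hx : x ≠ 0) :
    ContDiffAt ℝ 1 (fun y => nullStress u y *ᵥ (‖y‖⁻¹ • u y)) x :=
  contDiffAt_mulVec (fun k i => (contDiff_nullStress_apply hu (by norm_num) k i).contDiffAt)
    ((contDiffAt_inv_norm hx).smul (hu.contDiffAt.of_le (by norm_num)))

lemma contDiffAt_radialField_sq_norm (hu : ContDiffAt ℝ 1 u x) (hx : x ≠ 0) :
    ContDiffAt ℝ 1 (radialField 3 fun y => u y ⬝ᵥ u y) x :=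
  contDiffAt_radialField 3 (contDiffAt_dotProduct hu hu) hx

lemma contDiffAt_radialField_sq_dotProduct (hu : ContDiffAt ℝ 1 u x) (hx : x ≠ 0) :
    ContDiffAt ℝ 1 (radialField 5 fun y => (y.ofLp ⬝ᵥ u y) * (y.ofLp ⬝ᵥ u y)) x :=
  have hg := contDiffAt_dotProduct (by fun_prop) hu
  contDiffAt_radialField 5 (hg.mul hg) hx

lemma contDiffAt_lameFlux (hu : ContDiff ℝ 2 u) (hx : x ≠ 0) :
    ContDiffAt ℝ 1 (lameFlux α κ u) x := by
  have hu' : ContDiffAt ℝ 1 u x := hu.contDiffAt.of_le (by norm_num)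
  exact ((((contDiffAt_stress_mulVec_weightedField hu hx).const_smul _).add
    ((contDiffAt_radialField_sq_norm hu' hx).const_smul _)).add
    ((contDiffAt_radialField_sq_dotProduct hu' hx).const_smul _)).add
    ((contDiffAt_nullStress_mulVec hu hx).const_smul _)

lemma divg_lameFlux (hu : ContDiff ℝ 2 u) (hx : x ≠ 0) :
    divg (lameFlux α κ u) x =
      -divg (fun y => stress α u y *ᵥ weightedField κ u y) x
        - 2⁻¹ * divg (radialField 3 fun y => u y ⬝ᵥ u y) x
        - 3 / 2 * κ * divg (radialField 5 fun y => (y.ofLp ⬝ᵥ u y) * (y.ofLp ⬝ᵥ u y)) x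
        + κ * divg (fun y => nullStress u y *ᵥ (‖y‖⁻¹ • u y)) x := by
  have hu' : ContDiffAt ℝ 1 u x := hu.contDiffAt.of_le (by norm_num)
  have h₁ := (contDiffAt_stress_mulVec_weightedField (α := α) (κ := κ) hu hx).differentiableAt
    one_ne_zero
  have h₂ := (contDiffAt_radialField_sq_norm hu' hx).differentiableAt one_ne_zero
  have h₃ := (contDiffAt_radialField_sq_dotProduct hu' hx).differentiableAt one_ne_zero
  have h₄ := (contDiffAt_nullStress_mulVec hu hx).differentiableAt one_ne_zero
  unfold lameFlux
  rw [divg_add (by fun_prop) (by fun_prop), divg_add (by fun_prop) (by fun_prop),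
    divg_add (by fun_prop) (by fun_prop), divg_const_smul _ h₁, divg_const_smul _ h₂,
    divg_const_smul _ h₃, divg_const_smul _ h₄]
  ring

lemma residualForm_smul_right (c : ℝ) (M : Matrix (Fin 3) (Fin 3) ℝ) (v : Fin 3 → ℝ) :
    residualForm α κ M (c • v) = (M * Mᵀ).trace + κ * c ^ 2 * ((M *ᵥ v) ⬝ᵥ (M *ᵥ v))
      + α * M.trace * (M.trace + κ * c ^ 2 * (v ⬝ᵥ M *ᵥ v))
      - κ * (M.trace ^ 2 - (M * M).trace) := by
  simp only [residualForm, mulVec_smul, smul_dotProduct, dotProduct_smul, smul_eq_mul]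
  ring

lemma lame_dotProduct_weightedField (hκ : κ * (α + 2) = α) (hu : ContDiff ℝ 2 u) (hx : x ≠ 0) :
    lame α u x ⬝ᵥ weightedField κ u x =
      divg (lameFlux α κ u) x + ‖x‖⁻¹ * residualForm α κ (gradMatrix u x) (‖x‖⁻¹ • x.ofLp) := by
  have hu' : ContDiffAt ℝ 1 u x := hu.contDiffAt.of_le (by norm_num)
  have hd := hu'.differentiableAt one_ne_zero
  have hz := (contDiffAt_weightedField (κ := κ) hu' hx).differentiableAt one_ne_zero
  rw [divg_lameFlux hu hx, divg_stress_mulVec hu hz, divg_weightedField hd hx,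
    trace_gradMatrix_mul_gradMatrix_weightedField hd hx,
    divg_nullStress_mulVec_inv_norm_smul hu hx, residualForm_smul_right, trace_gradMatrix]
  linear_combination (‖x‖⁻¹ ^ 3 * (x.ofLp ⬝ᵥ u x) * divg u x) * hκ

lemma support_lameFlux_subset (α κ : ℝ) (u : E3 → Fin 3 → ℝ) :
    Function.support (lameFlux α κ u) ⊆ Function.support u := by
  intro x hx hux
  refine hx ?_
  simp [lameFlux, weightedField, radialField, hux]

end LameFlux

section Integration

open Matrix

variable {u : E3 → Fin 3 → ℝ} {α κ : ℝ}

lemma contDiff_lameFlux (hu : ContDiff ℝ 2 u) (h0 : (0 : E3) ∉ tsupport u) :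
    ContDiff ℝ 1 (lameFlux α κ u) := by
  rw [← contMDiff_iff_contDiff]
  refine contMDiff_of_tsupport fun x hx => contMDiffAt_iff_contDiffAt.2 ?_
  refine contDiffAt_lameFlux hu ?_
  rintro rfl
  exact h0 (closure_mono (support_lameFlux_subset α κ u) hx)

lemma hasCompactSupport_lameFlux (hc : HasCompactSupport u) :
    HasCompactSupport (lameFlux α κ u) :=
  hc.mono (support_lameFlux_subset α κ u)

lemma continuous_lame (hu : ContDiff ℝ 2 u) : Continuous (lame α u) := by
  refine continuous_pi fun i => ?_
  have eq : (fun x => lame α u x i) = fun x => -∑ k, pd k (fun y => stress α u y k i) x := by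
    ext x
    rw [sum_pd_stress hu, neg_neg]
  rw [eq]
  exact (continuous_finsetSum _ fun k _ => (contDiff_pd (n := 0)
    (contDiff_stress_apply (n := 1) hu (by norm_num) k i) (by norm_num) k).continuous).neg

lemma integrable_lame_dotProduct_weightedField (hu : ContDiff ℝ 2 u) (hc : HasCompactSupport u)
    (h0 : (0 : E3) ∉ tsupport u) :
    Integrable fun x => lame α u x ⬝ᵥ weightedField κ u x := by
  have support_subset : Function.support (fun x => lame α u x ⬝ᵥ weightedField κ u x) ⊆
      Function.support u := by
    intro x hx hux
    refine hx ?_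
    simp [weightedField, radialField, hux]
  refine (continuous_of_tsupport fun x hx => ?_).integrable_of_hasCompactSupport
    (hc.mono support_subset)
  have x_ne_zero : x ≠ 0 := by
    rintro rfl
    exact h0 (closure_mono support_subset hx)
  exact (contDiffAt_dotProduct (contDiff_zero.2 (continuous_lame hu)).contDiffAt
    (contDiffAt_weightedField (hu.contDiffAt.of_le zero_le) x_ne_zero)).continuousAt

lemma integral_lame_dotProduct_weightedField (hκ : κ * (α + 2) = α) (hu : ContDiff ℝ 2 u)
    (hc : HasCompactSupport u) (h0 : (0 : E3) ∉ tsupport u) :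
    ∫ x, lame α u x ⬝ᵥ weightedField κ u x =
      ∫ x : E3, ‖x‖⁻¹ * residualForm α κ (gradMatrix u x) (‖x‖⁻¹ • x.ofLp) := by
  have flux_smooth : ContDiff ℝ 1 (lameFlux α κ u) := contDiff_lameFlux hu h0
  have flux_compact : HasCompactSupport (lameFlux α κ u) := hasCompactSupport_lameFlux hc
  have ae_eq : (fun x => lame α u x ⬝ᵥ weightedField κ u x - divg (lameFlux α κ u) x)
      =ᵐ[volume] fun x => ‖x‖⁻¹ * residualForm α κ (gradMatrix u x) (‖x‖⁻¹ • x.ofLp) := by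
    filter_upwards [Measure.ae_ne volume 0] with x hx
    rw [lame_dotProduct_weightedField hκ hu hx, add_sub_cancel_left]
  rw [← integral_congr_ae ae_eq, integral_sub (integrable_lame_dotProduct_weightedField hu hc h0)
    (integrable_divg flux_smooth flux_compact), integral_divg_eq_zero flux_smooth flux_compact,
    sub_zero]

lemma integral_lame_dotProduct_weightedField_nonneg (hα : -1 < α)
    (h : 3 * α ^ 2 + 2 * α ≤ 2 * √2 * (α + 1) ^ 2) (hu : ContDiff ℝ 2 u)
    (hc : HasCompactSupport u) (h0 : (0 : E3) ∉ tsupport u) :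
    0 ≤ ∫ x, lame α u x ⬝ᵥ weightedField (α / (α + 2)) u x := by
  have hκ : α / (α + 2) * (α + 2) = α := div_mul_cancel₀ α (by linarith)
  rw [integral_lame_dotProduct_weightedField hκ hu hc h0]
  refine integral_nonneg fun x => ?_
  rcases eq_or_ne x 0 with rfl | hx
  · simp
  · exact mul_nonneg (inv_nonneg.2 (norm_nonneg x))
      (residualForm_nonneg hα h (inv_norm_smul_dotProduct_self hx) _)

lemma sum_lame_mul_Phi_mul (α : ℝ) (u : E3 → Fin 3 → ℝ) (x : E3) :
    ∑ i, ∑ j, lame α u x i * Phi α x i j * u x j =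
      cA α * (lame α u x ⬝ᵥ weightedField (α / (α + 2)) u x) := by
  have sum_Phi (i : Fin 3) :
      ∑ j, Phi α x i j * u x j = cA α * weightedField (α / (α + 2)) u x i := by
    simp only [Phi, weightedField, radialField, dotProduct, mul_add, add_mul,
      Finset.sum_add_distrib, mul_ite, ite_mul, mul_one, mul_zero, zero_mul, Finset.sum_ite_eq,
      Finset.mem_univ, if_true, Pi.add_apply, Pi.smul_apply, smul_eq_mul, Finset.mul_sum,
      Finset.sum_mul]
    congr 1
    · ring
    · refine Finset.sum_congr rfl fun j _ => ?_
      rw [div_eq_mul_inv _ (‖x‖ ^ 2), inv_pow]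
      ring
  simp only [mul_assoc, ← Finset.mul_sum, sum_Phi, dotProduct]
  simp only [Finset.mul_sum, mul_left_comm (cA α)]

end Integration

-- The condition on `α` is the discriminant condition for the binary form in the traces; it
-- describes an interval, approximately `-0.747 ≤ α ≤ 22.06`.
theorem lame_weighted_positive_definite_of_nonneg_general {α : ℝ} (hα : -1 < α)
    (h : 3 * α ^ 2 + 2 * α ≤ 2 * √2 * (α + 1) ^ 2) {u : E3 → Fin 3 → ℝ} (hu : ContDiff ℝ 2 u)
    (hc : HasCompactSupport u) (h0 : (0 : E3) ∉ tsupport u) :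
    0 ≤ ∫ x : E3, ∑ i, ∑ j, lame α u x i * Phi α x i j * u x j := by
  have cA_nonneg : 0 ≤ cA α :=
    div_nonneg (by linarith) (mul_nonneg (by positivity) (by linarith))
  simp only [sum_lame_mul_Phi_mul, integral_const_mul]
  exact mul_nonneg cA_nonneg (integral_lame_dotProduct_weightedField_nonneg hα h hu hc h0)

lemma trace_form_condition_of_le_two {α : ℝ} (hα : 0 ≤ α) (hα₂ : α ≤ 2) :
    3 * α ^ 2 + 2 * α ≤ 2 * √2 * (α + 1) ^ 2 := by
  have sqrt_lower : 1.4 ≤ √2 := Real.le_sqrt_of_sq_le (by norm_num)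
  nlinarith [mul_le_mul_of_nonneg_right sqrt_lower (sq_nonneg (α + 1))]

lemma le_two_of_quintic_neg {α : ℝ} (hquintic : 6 * α ^ 5 + (23 + 3 * √2) * α ^ 4
    + (13 + 19 * √2) * α ^ 3 - (77 - 38 * √2) * α ^ 2 - (157 - 24 * √2) * α - 96 < 0) :
    α ≤ 2 := by
  by_contra! two_lt
  have sqrt_lower : 1.4 ≤ √2 := Real.le_sqrt_of_sq_le (by norm_num)
  obtain ⟨t, ht, rfl⟩ : ∃ t, 0 < t ∧ α = t + 2 := ⟨α - 2, by linarith, by ring⟩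
  have mono_in_sqrt := mul_nonneg (sub_nonneg.2 sqrt_lower)
    (show 0 ≤ 3 * (t + 2) ^ 4 + 19 * (t + 2) ^ 3 + 38 * (t + 2) ^ 2 + 24 * (t + 2) by positivity)
  have pos_after_shift : 0 < 6 * (t + 2) ^ 5 + (23 + 3 * 1.4) * (t + 2) ^ 4
      + (13 + 19 * 1.4) * (t + 2) ^ 3 - (77 - 38 * 1.4) * (t + 2) ^ 2 - (157 - 24 * 1.4) * (t + 2)
      - 96 := by
    ring_nf
    positivity
  linarith

/-- For `0 ≤ α` satisfying the two polynomial inequalities (i.e. `0 ≤ α < α₊`),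
the 3D Lamé system is positive definite with weight `Φ`. -/
theorem lame_weighted_positive_definite_of_nonneg
    (α : ℝ) (hα : 0 ≤ α)
    (h1 : α ^ 4 - 4 * (1 - Real.sqrt 2) * α ^ 3 - 12 * (3 - Real.sqrt 2) * α ^ 2 - 12 * (6 - Real.sqrt 2) * α - 48 < 0)
    (h2 : 6 * α ^ 5 + (23 + 3 * Real.sqrt 2) * α ^ 4 + (13 + 19 * Real.sqrt 2) * α ^ 3 - (77 - 38 * Real.sqrt 2) * α ^ 2 - (157 - 24 * Real.sqrt 2) * α - 96 < 0)
    (u : E3 → Fin 3 → ℝ) (hu : IsTestOn ({(0 : E3)}ᶜ) u) :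
    0 ≤ ∫ x : E3, ∑ i, ∑ j, lame α u x i * Phi α x i j * u x j := by
  obtain ⟨smooth, compact, supp⟩ := hu
  exact lame_weighted_positive_definite_of_nonneg_general (by linarith)
    (trace_form_condition_of_le_two hα (le_two_of_quintic_neg h2))
    (smooth.of_le (WithTop.coe_le_coe.2 le_top)) compact fun h => supp h rfl
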